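/- Let a ∈ ℝ² and let r : ℝ → ℝ² be twice differentiable with r''(t) = r(t) − a for all t ≥ 0. If a = r(0) + r'(0), then r''(t) = −r'(t) for all t ≥ 0; i.e., after stepping to the instantaneous capture point, the center-of-mass dynamics reduce to the linear system ṙ_CoM'' = −ṙ_CoM, whose eigenvalue is −1. -/

import Mathlib

/-!
Adding `r' = r'` to `r'' = r - a` shows that the capture point `ξ = r + r'` obeys the first-order
equation `ξ' = ξ - a`, so `ξ t - a = exp (t - t₀) • (ξ t₀ - a)`. If the ankle is placed at `ξ t₀`,
the capture point never leaves it, and `r + r' = a` turns `r'' = r - a` into `r'' = -r'`.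
-/

open Real Set

section LinearODE

variable {E : Type*} [NormedAddCommGroup E] [NormedSpace ℝ E] {f : ℝ → E} {a : E} {c t₀ t : ℝ}

theorem hasDerivWithinAt_exp_neg_mul_smul_sub {s : Set ℝ}
    (hf : HasDerivWithinAt f (c • (f t - a)) s t) :
    HasDerivWithinAt (fun u ↦ exp (-(c * (u - t₀))) • (f u - a)) 0 s t := by
  have hexp : HasDerivAt (fun u ↦ exp (-(c * (u - t₀)))) (exp (-(c * (t - t₀))) * -(c * 1)) t :=
    (((hasDerivAt_id t).sub_const t₀).const_mul c).neg.exp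
  refine (hexp.hasDerivWithinAt.smul (hf.sub_const a)).congr_deriv ?_
  module

theorem sub_eq_exp_mul_smul_of_hasDerivWithinAt
    (hf : ∀ u ∈ Ici t₀, HasDerivWithinAt f (c • (f u - a)) (Ici t₀) u) (ht : t₀ ≤ t) :
    f t - a = exp (c * (t - t₀)) • (f t₀ - a) := by
  let g : ℝ → E := fun u ↦ exp (-(c * (u - t₀))) • (f u - a)
  have hg : ∀ u ∈ Ici t₀, HasDerivWithinAt g 0 (Ici t₀) u := fun u hu ↦
    hasDerivWithinAt_exp_neg_mul_smul_sub (hf u hu)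
  have hg_const : g t = g t₀ :=
    constant_of_has_deriv_right_zero
      (fun u hu ↦ (hg u hu.1).continuousWithinAt.mono Icc_subset_Ici_self)
      (fun u hu ↦ (hg u hu.1).mono (Ici_subset_Ici.2 hu.1)) t ⟨ht, le_rfl⟩
  calc f t - a = exp (c * (t - t₀)) • g t := by
        rw [smul_smul, ← exp_add, add_neg_cancel, exp_zero, one_smul]
    _ = exp (c * (t - t₀)) • (f t₀ - a) := by
        simp only [hg_const, g, sub_self, mul_zero, neg_zero, exp_zero, one_smul]

end LinearODE

section CapturePoint

variable {E : Type*} [NormedAddCommGroup E] [NormedSpace ℝ E] {r r' : ℝ → E} {a : E} {t₀ t : ℝ}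

/-- The instantaneous capture point `r_ic` of a normalized linear inverted pendulum: the ankle
location that brings the center of mass to rest. The velocity `r'` is passed as a separate function,
so that it may be a one-sided derivative of `r` at the initial time. -/
def capturePoint (r r' : ℝ → E) (t : ℝ) : E := r t + r' t

theorem hasDerivWithinAt_capturePoint {s : Set ℝ} (hr : HasDerivWithinAt r (r' t) s t)
    (hr' : HasDerivWithinAt r' (r t - a) s t) :
    HasDerivWithinAt (capturePoint r r') (capturePoint r r' t - a) s t :=
  (hr.add hr').congr_deriv (by rw [capturePoint]; abel)

theorem capturePoint_sub_eq_exp_smul (hr : ∀ u ∈ Ici t₀, HasDerivWithinAt r (r' u) (Ici t₀) u)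
    (hr' : ∀ u ∈ Ici t₀, HasDerivWithinAt r' (r u - a) (Ici t₀) u) (ht : t₀ ≤ t) :
    capturePoint r r' t - a = exp (t - t₀) • (capturePoint r r' t₀ - a) := by
  have hξ : ∀ u ∈ Ici t₀, HasDerivWithinAt (capturePoint r r')
      ((1 : ℝ) • (capturePoint r r' u - a)) (Ici t₀) u := fun u hu ↦ by
    simpa only [one_smul] using hasDerivWithinAt_capturePoint (hr u hu) (hr' u hu)
  simpa only [one_mul] using sub_eq_exp_mul_smul_of_hasDerivWithinAt hξ ht

theorem capturePoint_eq_of_eq (hr : ∀ u ∈ Ici t₀, HasDerivWithinAt r (r' u) (Ici t₀) u)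
    (hr' : ∀ u ∈ Ici t₀, HasDerivWithinAt r' (r u - a) (Ici t₀) u)
    (hcap : capturePoint r r' t₀ = a) (ht : t₀ ≤ t) : capturePoint r r' t = a := by
  rw [← sub_eq_zero, capturePoint_sub_eq_exp_smul hr hr' ht, hcap, sub_self, smul_zero]

end CapturePoint

theorem stmt3_general {E : Type*} [NormedAddCommGroup E] [NormedSpace ℝ E] {a : E}
    {r r' r'' : ℝ → E} {t₀ : ℝ}
    (hr : ∀ t ∈ Ici t₀, HasDerivWithinAt r (r' t) (Ici t₀) t)
    (hr' : ∀ t ∈ Ici t₀, HasDerivWithinAt r' (r'' t) (Ici t₀) t)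
    (hode : ∀ t ∈ Ici t₀, r'' t = r t - a) (hcap : a = r t₀ + r' t₀) :
    ∀ t ∈ Ici t₀, r'' t = -r' t := by
  intro t ht
  have hξ : r t + r' t = a :=
    capturePoint_eq_of_eq hr (fun u hu ↦ hode u hu ▸ hr' u hu) hcap.symm ht
  rw [hode t ht, ← hξ]
  abel

/-- After stepping to the instantaneous capture point (`a = r 0 + r' 0`),
the LIPM center-of-mass dynamics `r'' = r - a` on `t ≥ 0` reduce to the
linear system `r'' = -r'` (eigenvalue `-1`). -/
theorem stmt3 (a : EuclideanSpace ℝ (Fin 2)) (r : ℝ → EuclideanSpace ℝ (Fin 2))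
    (hr : Differentiable ℝ r) (hr' : Differentiable ℝ (deriv r))
    (hode : ∀ t, 0 ≤ t → deriv (deriv r) t = r t - a)
    (hcap : a = r 0 + deriv r 0) :
    ∀ t, 0 ≤ t → deriv (deriv r) t = - deriv r t :=
  stmt3_general (fun t _ ↦ (hr t).hasDerivAt.hasDerivWithinAt)
    (fun t _ ↦ (hr' t).hasDerivAt.hasDerivWithinAt) hode hcap
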